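/- arXiv:1810.08486 — 3 statements merged into one kernel-verified Lean document; each statement's English description precedes it below -/
import Mathlib

section
/- Compatibility of the connection ∇⁰ with the D-valued inner product (Proposition A.1, second part): for all module functions f, g, every W ∈ {X, Y, Z}, and every (x, y, p) ∈ ℝ × ℝ × ℤ, ⟨∇⁰_W f, g⟩(x,y,p) + ⟨f, ∇⁰_W g⟩(x,y,p) = (δ_W⟨f,g⟩)(x,y,p). -/
noncomputable section

/-- `e(t) = exp(2πit)`. -/
def e2 (t : ℝ) : ℂ := Complex.exp (2 * Real.pi * Complex.I * t)

/-- Partial derivative in the first variable. -/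
def pdX (f : ℝ × ℝ → ℂ) (x y : ℝ) : ℂ := deriv (fun t => f (t, y)) x

/-- Partial derivative in the second variable. -/
def pdY (f : ℝ × ℝ → ℂ) (x y : ℝ) : ℂ := deriv (fun t => f (x, t)) y

/-- A module function: smooth, 1-periodic in the second variable, and supported in
`K × ℝ` for some compact `K ⊆ ℝ`. -/
def IsModuleFn (f : ℝ × ℝ → ℂ) : Prop :=
  ContDiff ℝ (⊤ : ℕ∞) f ∧ (∀ x y : ℝ, f (x, y + 1) = f (x, y)) ∧
    ∃ K : Set ℝ, IsCompact K ∧ ∀ x y : ℝ, x ∉ K → f (x, y) = 0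

/-- `(∇⁰_X f)(x,y) = −∂f/∂y(x,y) + (πci/(2μ))·x²·f(x,y)`. -/
def n0X (c : ℕ) (μ : ℝ) (f : ℝ × ℝ → ℂ) : ℝ × ℝ → ℂ := fun q =>
  -pdY f q.1 q.2 + (Real.pi : ℂ) * (c : ℂ) * Complex.I / (2 * (μ : ℂ)) * (q.1 : ℂ) ^ 2 * f q

/-- `(∇⁰_Y f)(x,y) = −∂f/∂x(x,y)`. -/
def n0Y (f : ℝ × ℝ → ℂ) : ℝ × ℝ → ℂ := fun q => -pdX f q.1 q.2

/-- `(∇⁰_Z f)(x,y) = (πix/μ)·f(x,y)`. -/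
def n0Z (μ : ℝ) (f : ℝ × ℝ → ℂ) : ℝ × ℝ → ℂ := fun q =>
  (Real.pi : ℂ) * Complex.I * (q.1 : ℂ) / (μ : ℂ) * f q

/-- A smooth algebra element of `D^c_{μν}`, presented as a `ℤ`-indexed family of smooth
functions on `ℝ × ℝ`: smooth, 1-periodic in `y`, finitely supported in the `ℤ`-variable,
and `ρ`-invariant. -/
def IsAlgElem (c : ℕ) (ν : ℝ) (Φ : ℤ → ℝ × ℝ → ℂ) : Prop :=
  (∀ p : ℤ, ContDiff ℝ (⊤ : ℕ∞) (Φ p)) ∧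
  (∀ (p : ℤ) (x y : ℝ), Φ p (x, y + 1) = Φ p (x, y)) ∧
  {p : ℤ | Φ p ≠ 0}.Finite ∧
  ∀ (p k : ℤ) (x y : ℝ),
    e2 (-((c : ℝ) * (k : ℝ) * (p : ℝ) * (y - (p : ℝ) * ν))) * Φ p (x + (k : ℝ), y) = Φ p (x, y)

/-- The right action of `Φ ∈ D^c_{μν}` on the module function `f`:
`(f·Φ)(x,y) = Σ_q f(x+2qμ, y+2qν)·conj(Φ(x+2qμ, y+2qν, q))`. -/
def rAct (μ ν : ℝ) (f : ℝ × ℝ → ℂ) (Φ : ℤ → ℝ × ℝ → ℂ) : ℝ × ℝ → ℂ := fun q =>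
  ∑ᶠ p : ℤ, f (q.1 + 2 * (p : ℝ) * μ, q.2 + 2 * (p : ℝ) * ν) *
    (starRingEnd ℂ) (Φ p (q.1 + 2 * (p : ℝ) * μ, q.2 + 2 * (p : ℝ) * ν))

/-- `(δ_X Φ)(x,y,p) = 2πicp(x−pμ)·Φ(x,y,p) − ∂Φ/∂y(x,y,p)`. -/
def dAlgX (c : ℕ) (μ : ℝ) (Φ : ℤ → ℝ × ℝ → ℂ) : ℤ → ℝ × ℝ → ℂ := fun p q =>
  2 * (Real.pi : ℂ) * Complex.I * (c : ℂ) * (p : ℂ) * ((q.1 : ℂ) - (p : ℂ) * (μ : ℂ)) * Φ p q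
    - pdY (Φ p) q.1 q.2

/-- `(δ_Y Φ)(x,y,p) = −∂Φ/∂x(x,y,p)`. -/
def dAlgY (Φ : ℤ → ℝ × ℝ → ℂ) : ℤ → ℝ × ℝ → ℂ := fun p q => -pdX (Φ p) q.1 q.2

/-- `(δ_Z Φ)(x,y,p) = 2πip·Φ(x,y,p)`. -/
def dAlgZ (Φ : ℤ → ℝ × ℝ → ℂ) : ℤ → ℝ × ℝ → ℂ := fun p q =>
  2 * (Real.pi : ℂ) * Complex.I * (p : ℂ) * Φ p q

/-- The `D^c_{μν}`-valued inner product
`⟨f,g⟩(x,y,p) = Σ_k e(−ckp(y−pν))·f(x+k,y)·conj(g(x−2pμ+k, y−2pν))`. -/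
def ipD (c : ℕ) (μ ν : ℝ) (f g : ℝ × ℝ → ℂ) : ℤ → ℝ × ℝ → ℂ := fun p q =>
  ∑ᶠ k : ℤ, e2 (-((c : ℝ) * (k : ℝ) * (p : ℝ) * (q.2 - (p : ℝ) * ν))) *
    f (q.1 + (k : ℝ), q.2) *
    (starRingEnd ℂ) (g (q.1 - 2 * (p : ℝ) * μ + (k : ℝ), q.2 - 2 * (p : ℝ) * ν))


lemma ipD_eq_sum (c : ℕ) (μ ν : ℝ) (f g : ℝ × ℝ → ℂ) (R : ℝ)
    (hR : ∀ x y : ℝ, R < |x| → f (x, y) = 0) (x0 x y : ℝ) (p : ℤ) (hx : |x - x0| < 1) :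
    ipD c μ ν f g p (x, y) = ∑ k ∈ Finset.Icc (-⌈|x0| + 1 + R⌉) ⌈|x0| + 1 + R⌉,
      e2 (-((c : ℝ) * (k : ℝ) * (p : ℝ) * (y - (p : ℝ) * ν))) *
      f (x + (k : ℝ), y) *
      (starRingEnd ℂ) (g (x - 2 * (p : ℝ) * μ + (k : ℝ), y - 2 * (p : ℝ) * ν)) := by
  unfold ipD
  apply finsum_eq_sum_of_support_subset
  intro k hk
  by_contra hkS
  apply hk
  have : f (x + (k : ℝ), y) = 0 := by
    apply hR
    have h1 : |x0| + 1 + R < |(k : ℝ)| := by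
      by_contra hle
      push Not at hle
      apply hkS
      have h2 := hle.trans (Int.le_ceil _)
      have h3 : |k| ≤ ⌈|x0| + 1 + R⌉ := by exact_mod_cast h2
      rw [Finset.mem_coe, Finset.mem_Icc]
      exact abs_le.mp h3
    have h4 : |(k : ℝ)| ≤ |x + k| + |x - x0| + |x0| := by
      have e : (k : ℝ) = (x + k) - (x - x0) - x0 := by ring
      calc |(k : ℝ)| = |(x + k) - (x - x0) - x0| := by rw [← e]
        _ ≤ |(x + k) - (x - x0)| + |x0| := abs_sub _ _
        _ ≤ _ := by gcongr; exact abs_sub _ _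
    linarith
  simp [this]

lemma hasDerivAt_e2 (a b t : ℝ) :
    HasDerivAt (fun t : ℝ => e2 (-(a * (t - b))))
      (-(2 * Real.pi * Complex.I * a) * e2 (-(a * (t - b)))) t := by
  unfold e2
  have h : HasDerivAt (fun t : ℝ => (-(a * (t - b)) : ℝ)) (-a) t := by
    simpa using (((hasDerivAt_id t).sub_const b).const_mul a).fun_neg
  have h2 := (h.ofReal_comp.const_mul (2 * Real.pi * Complex.I : ℂ)).cexp
  refine h2.congr_deriv ?_
  push_cast
  ring

lemma hasDerivAt_pdX {f : ℝ × ℝ → ℂ} (hf : ContDiff ℝ (⊤ : ℕ∞) f) (x y : ℝ) :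
    HasDerivAt (fun t => f (t, y)) (pdX f x y) x := by
  have hd : Differentiable ℝ f := hf.differentiable (by simp)
  have : DifferentiableAt ℝ (fun t : ℝ => f (t, y)) x := by fun_prop
  exact this.hasDerivAt

lemma hasDerivAt_pdY {f : ℝ × ℝ → ℂ} (hf : ContDiff ℝ (⊤ : ℕ∞) f) (x y : ℝ) :
    HasDerivAt (fun t => f (x, t)) (pdY f x y) y := by
  have hd : Differentiable ℝ f := hf.differentiable (by simp)
  have : DifferentiableAt ℝ (fun t : ℝ => f (x, t)) y := by fun_prop
  exact this.hasDerivAt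

lemma hasDerivAt_conj {h : ℝ → ℂ} {h' : ℂ} {t : ℝ} (hh : HasDerivAt h h' t) :
    HasDerivAt (fun s => (starRingEnd ℂ) (h s)) ((starRingEnd ℂ) h') t := by
  simpa using hh.star

/-- Proposition A.1, compatibility of `∇⁰` with `⟨·,·⟩_R^D`: for all module
functions `f, g`, every `W ∈ {X, Y, Z}`, and every `(x, y, p)`,
`⟨∇⁰_W f, g⟩(x,y,p) + ⟨f, ∇⁰_W g⟩(x,y,p) = (δ_W⟨f,g⟩)(x,y,p)`. -/
theorem statement1 (c : ℕ) (hc : 0 < c) (μ ν : ℝ) (hμ : μ ≠ 0)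
    (f g : ℝ × ℝ → ℂ) (hf : IsModuleFn f) (hg : IsModuleFn g) :
    ∀ (x y : ℝ) (p : ℤ),
      (ipD c μ ν (n0X c μ f) g p (x, y) + ipD c μ ν f (n0X c μ g) p (x, y) =
        2 * (Real.pi : ℂ) * Complex.I * (c : ℂ) * (p : ℂ) * ((x : ℂ) - (p : ℂ) * (μ : ℂ)) *
          ipD c μ ν f g p (x, y) - pdY (ipD c μ ν f g p) x y) ∧
      (ipD c μ ν (n0Y f) g p (x, y) + ipD c μ ν f (n0Y g) p (x, y) =
        -pdX (ipD c μ ν f g p) x y) ∧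
      (ipD c μ ν (n0Z μ f) g p (x, y) + ipD c μ ν f (n0Z μ g) p (x, y) =
        2 * (Real.pi : ℂ) * Complex.I * (p : ℂ) * ipD c μ ν f g p (x, y)) := by
  intro x y p
  obtain ⟨hfs, -, K, hK, hfK⟩ := hf
  obtain ⟨hgs, -, -⟩ := hg
  obtain ⟨R, hKR⟩ := hK.isBounded.subset_closedBall 0
  have hR : ∀ x y : ℝ, R < |x| → f (x, y) = 0 := by
    intro x y hx
    apply hfK
    intro hxK
    have := hKR hxK
    rw [Metric.mem_closedBall, dist_zero_right, Real.norm_eq_abs] at this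
    linarith
  have hRY : ∀ x y : ℝ, R < |x| → pdY f x y = 0 := by
    intro x y hx
    simp [pdY, hR x _ hx]
  have hRX : ∀ x y : ℝ, R < |x| → pdX f x y = 0 := by
    intro x y hx
    have : (fun t => f (t, y)) =ᶠ[nhds x] fun _ => 0 := by
      filter_upwards [(isOpen_lt continuous_const continuous_abs).mem_nhds hx] with t ht
      exact hR t y ht
    simp [pdX, this.deriv_eq]
  have h1 : ∀ x y : ℝ, R < |x| → n0X c μ f (x, y) = 0 := by
    intro x y hx
    simp [n0X, hR x y hx, hRY x y hx]
  have h2 : ∀ x y : ℝ, R < |x| → n0Y f (x, y) = 0 := by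
    intro x y hx
    simp [n0Y, hRX x y hx]
  have h3 : ∀ x y : ℝ, R < |x| → n0Z μ f (x, y) = 0 := by
    intro x y hx
    simp [n0Z, hR x y hx]
  have hμ' : (μ : ℂ) ≠ 0 := by exact_mod_cast hμ
  have hxx : |x - x| < 1 := by simp
  refine ⟨?_, ?_, ?_⟩
  · have hD : pdY (ipD c μ ν f g p) x y = ∑ k ∈ Finset.Icc (-⌈|x| + 1 + R⌉) ⌈|x| + 1 + R⌉,
        ((-(2 * Real.pi * Complex.I * ((c : ℝ) * k * p : ℝ)) * e2 (-((c : ℝ) * (k : ℝ) * (p : ℝ) * (y - (p : ℝ) * ν))) * f (x + k, y) +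
          e2 (-((c : ℝ) * (k : ℝ) * (p : ℝ) * (y - (p : ℝ) * ν))) * pdY f (x + k) y) *
          (starRingEnd ℂ) (g (x - 2 * (p : ℝ) * μ + (k : ℝ), y - 2 * (p : ℝ) * ν)) +
        e2 (-((c : ℝ) * (k : ℝ) * (p : ℝ) * (y - (p : ℝ) * ν))) * f (x + k, y) *
          (starRingEnd ℂ) (pdY g (x - 2 * (p : ℝ) * μ + (k : ℝ)) (y - 2 * (p : ℝ) * ν))) := by
      unfold pdY
      rw [funext fun t => ipD_eq_sum c μ ν f g R hR x x t p hxx]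
      refine (HasDerivAt.fun_sum fun k _ => ?_).deriv
      refine ((hasDerivAt_e2 ((c : ℝ) * k * p) (p * ν) y).mul
        (hasDerivAt_pdY hfs (x + k) y)).mul (hasDerivAt_conj ?_)
      exact (hasDerivAt_pdY hgs (x - 2 * p * μ + k) (y - 2 * p * ν)).comp_sub_const y (2 * p * ν)
    rw [hD, ipD_eq_sum c μ ν _ g R h1 x x y p hxx, ipD_eq_sum c μ ν f _ R hR x x y p hxx,
      ipD_eq_sum c μ ν f _ R hR x x y p hxx, Finset.mul_sum, ← Finset.sum_add_distrib,
      ← Finset.sum_sub_distrib]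
    refine Finset.sum_congr rfl fun k _ => ?_
    simp only [n0X, map_add, map_neg, map_mul, map_div₀, map_pow, Complex.conj_ofReal,
      Complex.conj_I, map_natCast, map_ofNat, Pi.mul_apply]
    push_cast
    field_simp
    ring
  · have hD : pdX (ipD c μ ν f g p) x y = ∑ k ∈ Finset.Icc (-⌈|x| + 1 + R⌉) ⌈|x| + 1 + R⌉,
        ((0 * f (x + k, y) + e2 (-((c : ℝ) * (k : ℝ) * (p : ℝ) * (y - (p : ℝ) * ν))) * pdX f (x + k) y) *
          (starRingEnd ℂ) (g (x - 2 * (p : ℝ) * μ + (k : ℝ), y - 2 * (p : ℝ) * ν)) +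
        e2 (-((c : ℝ) * (k : ℝ) * (p : ℝ) * (y - (p : ℝ) * ν))) * f (x + k, y) *
          (starRingEnd ℂ) (pdX g (x - 2 * (p : ℝ) * μ + (k : ℝ)) (y - 2 * (p : ℝ) * ν))) := by
      unfold pdX
      have hev : (fun t => ipD c μ ν f g p (t, y)) =ᶠ[nhds x] fun t => ∑ k ∈ Finset.Icc (-⌈|x| + 1 + R⌉) ⌈|x| + 1 + R⌉,
          e2 (-((c : ℝ) * (k : ℝ) * (p : ℝ) * (y - (p : ℝ) * ν))) * f (t + (k : ℝ), y) *
          (starRingEnd ℂ) (g (t - 2 * (p : ℝ) * μ + (k : ℝ), y - 2 * (p : ℝ) * ν)) := by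
        filter_upwards [Metric.ball_mem_nhds x one_pos] with t ht
        exact ipD_eq_sum c μ ν f g R hR x t y p (by simpa [Real.dist_eq] using ht)
      rw [hev.deriv_eq]
      refine (HasDerivAt.fun_sum fun k _ => ?_).deriv
      refine ((hasDerivAt_const x _).mul
        ((hasDerivAt_pdX hfs (x + k) y).comp_add_const x (k : ℝ))).mul (hasDerivAt_conj ?_)
      have hg' := hasDerivAt_pdX hgs (x - 2 * p * μ + k) (y - 2 * p * ν)
      exact (hg'.comp_add_const (x - 2 * p * μ) (k : ℝ)).comp_sub_const x (2 * p * μ)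
    rw [hD, ipD_eq_sum c μ ν _ g R h2 x x y p hxx, ipD_eq_sum c μ ν f _ R hR x x y p hxx,
      ← Finset.sum_add_distrib, ← Finset.sum_neg_distrib]
    refine Finset.sum_congr rfl fun k _ => ?_
    simp only [n0Y, map_neg, Pi.mul_apply]
    ring
  · rw [ipD_eq_sum c μ ν _ g R h3 x x y p hxx, ipD_eq_sum c μ ν f _ R hR x x y p hxx,
      ipD_eq_sum c μ ν f _ R hR x x y p hxx, Finset.mul_sum, ← Finset.sum_add_distrib]
    refine Finset.sum_congr rfl fun k _ => ?_
    simp only [n0Z, map_mul, map_div₀, Complex.conj_ofReal, Complex.conj_I]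
    push_cast
    field_simp
    ring

end
end

section
/- A class of connections with the same constant curvature as ∇⁰ (Theorem 'thm:YM-connection'(a)): let g₁, g₂ : ℝ → ℝ be differentiable functions with g₁(y+1) = g₁(y), g₁(y − 2pν) = g₁(y) and g₂(x − 2pμ) = g₂(x) for all p ∈ ℤ, and define operators on module functions by (A_X f)(x,y) = (∇⁰_X f)(x,y) − i·g₁(y)·f(x,y), (A_Y f)(x,y) = (∇⁰_Y f)(x,y) − i·g₂(x)·f(x,y), and A_Z = ∇⁰_Z. Then for every module function f: (A_X A_Y − A_Y A_X − c·A_Z) f = 0, (A_X A_Z − A_Z A_X) f = 0, and (A_Y A_Z − A_Z A_Y) f = −(πi/μ)·f. (Hence the perturbed connection ∇ = ∇⁰ + H, with H_X = i·g₁·δ₀, H_Y = i·g₂·δ₀, H_Z = 0, has the same constant curvature Θ_∇(X,Y) = Θ_∇(X,Z) = 0, Θ_∇(Y,Z) = (πi/μ)·Id_E as ∇⁰.) -/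
noncomputable section

theorem aux_hX (G : ℝ × ℝ → ℂ) (hG : Differentiable ℝ G) (x y : ℝ) :
    HasDerivAt (fun t => G (t, y)) (fderiv ℝ G (x, y) (1, 0)) x := by
  have h1 : HasDerivAt (fun t : ℝ => (t, y)) ((1 : ℝ), (0 : ℝ)) x :=
    (hasDerivAt_id x).prodMk (hasDerivAt_const x y)
  exact (hG (x, y)).hasFDerivAt.comp_hasDerivAt x h1

theorem aux_hY (G : ℝ × ℝ → ℂ) (hG : Differentiable ℝ G) (x y : ℝ) :
    HasDerivAt (fun t => G (x, t)) (fderiv ℝ G (x, y) (0, 1)) y := by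
  have h1 : HasDerivAt (fun t : ℝ => (x, t)) ((0 : ℝ), (1 : ℝ)) y :=
    (hasDerivAt_const y x).prodMk (hasDerivAt_id y)
  exact (hG (x, y)).hasFDerivAt.comp_hasDerivAt y h1

/-- Theorem `thm:YM-connection`(a): with `g₁, g₂ : ℝ → ℝ` differentiable,
`g₁(y+1) = g₁(y)`, `g₁(y−2pν) = g₁(y)`, `g₂(x−2pμ) = g₂(x)` for all `p ∈ ℤ`, the operators
`A_X f = ∇⁰_X f − i·g₁(y)·f`, `A_Y f = ∇⁰_Y f − i·g₂(x)·f`, `A_Z = ∇⁰_Z` satisfy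
`(A_XA_Y − A_YA_X − c·A_Z) f = 0`, `(A_XA_Z − A_ZA_X) f = 0`, and
`(A_YA_Z − A_ZA_Y) f = −(πi/μ)·f` for every module function `f`; i.e. the perturbed connection
has the same constant curvature as `∇⁰`. -/
theorem statement8 (c : ℕ) (hc : 0 < c) (μ ν : ℝ) (hμ : μ ≠ 0) (hν : ν ≠ 0)
    (g₁ g₂ : ℝ → ℝ) (hg₁d : Differentiable ℝ g₁) (hg₂d : Differentiable ℝ g₂)
    (hg₁per : ∀ y : ℝ, g₁ (y + 1) = g₁ y)
    (hg₁inv : ∀ (p : ℤ) (y : ℝ), g₁ (y - 2 * (p : ℝ) * ν) = g₁ y)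
    (hg₂inv : ∀ (p : ℤ) (x : ℝ), g₂ (x - 2 * (p : ℝ) * μ) = g₂ x)
    (AX AY AZ : (ℝ × ℝ → ℂ) → ℝ × ℝ → ℂ)
    (hAX : AX = fun f q => n0X c μ f q - Complex.I * (g₁ q.2 : ℂ) * f q)
    (hAY : AY = fun f q => n0Y f q - Complex.I * (g₂ q.1 : ℂ) * f q)
    (hAZ : AZ = n0Z μ)
    (f : ℝ × ℝ → ℂ) (hf : IsModuleFn f) :
    (∀ q : ℝ × ℝ, AX (AY f) q - AY (AX f) q - (c : ℂ) * AZ f q = 0) ∧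
    (∀ q : ℝ × ℝ, AX (AZ f) q - AZ (AX f) q = 0) ∧
    (∀ q : ℝ × ℝ, AY (AZ f) q - AZ (AY f) q
      = -((Real.pi : ℂ) * Complex.I / (μ : ℂ)) * f q) := by
  have hs : ContDiff ℝ (⊤ : ℕ∞) f := hf.1
  have hs2 : ContDiff ℝ 2 f := by exact_mod_cast contDiff_infty.1 hs 2
  have hd : Differentiable ℝ f := hs.differentiable (by simp)
  have hF : ContDiff ℝ 1 (fderiv ℝ f) := hs2.fderiv_right (by norm_num)
  have hFd : Differentiable ℝ (fderiv ℝ f) := hF.differentiable (by simp)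
  have hpX : ∀ x y, pdX f x y = fderiv ℝ f (x, y) (1, 0) := fun x y => (aux_hX f hd x y).deriv
  have hpY : ∀ x y, pdY f x y = fderiv ℝ f (x, y) (0, 1) := fun x y => (aux_hY f hd x y).deriv
  have hv : ∀ v : ℝ × ℝ, Differentiable ℝ (fun q => fderiv ℝ f q v) := fun v =>
    hFd.clm_apply (differentiable_const v)
  have hvd : ∀ (v w q : ℝ × ℝ), fderiv ℝ (fun q => fderiv ℝ f q v) q w
      = fderiv ℝ (fderiv ℝ f) q w v := by
    intro v w q
    rw [fderiv_clm_apply (hFd q) (differentiableAt_const v)]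
    simp
  have hsym : ∀ q : ℝ × ℝ, fderiv ℝ (fderiv ℝ f) q (0, 1) (1, 0)
      = fderiv ℝ (fderiv ℝ f) q (1, 0) (0, 1) := fun q =>
    (hs2.contDiffAt.isSymmSndFDerivAt (by simp)) _ _
  have hid : ∀ x : ℝ, HasDerivAt (fun t : ℝ => (t : ℂ)) 1 x := fun x =>
    Complex.ofRealCLM.hasDerivAt
  have hμ' : (μ : ℂ) ≠ 0 := by exact_mod_cast hμ
  subst hAX hAY hAZ
  refine ⟨?_, ?_, ?_⟩
  · rintro ⟨x, y⟩
    have e1 : pdY (fun q => n0Y f q - Complex.I * (g₂ q.1 : ℂ) * f q) x y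
        = -(fderiv ℝ (fderiv ℝ f) (x, y) (0, 1) (1, 0))
          - Complex.I * (g₂ x : ℂ) * fderiv ℝ f (x, y) (0, 1) := by
      simp only [pdY, n0Y, hpX]
      have h := ((aux_hY _ (hv (1, 0)) x y).neg).sub
        ((aux_hY f hd x y).const_mul (Complex.I * (g₂ x : ℂ)))
      rw [hvd] at h
      exact h.deriv
    have e2 : pdX (fun q => n0X c μ f q - Complex.I * (g₁ q.2 : ℂ) * f q) x y
        = -(fderiv ℝ (fderiv ℝ f) (x, y) (1, 0) (0, 1))
          + ((Real.pi : ℂ) * (c : ℂ) * Complex.I / (2 * (μ : ℂ)) * (2 * (x : ℂ)) * f (x, y)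
            + (Real.pi : ℂ) * (c : ℂ) * Complex.I / (2 * (μ : ℂ)) * (x : ℂ) ^ 2
              * fderiv ℝ f (x, y) (1, 0))
          - Complex.I * (g₁ y : ℂ) * fderiv ℝ f (x, y) (1, 0) := by
      simp only [pdX, n0X, hpY]
      have h := (((aux_hX _ (hv (0, 1)) x y).neg).add
        ((((hid x).pow 2).const_mul
          ((Real.pi : ℂ) * (c : ℂ) * Complex.I / (2 * (μ : ℂ)))).mul (aux_hX f hd x y))).sub
        ((aux_hX f hd x y).const_mul (Complex.I * (g₁ y : ℂ)))
      rw [hvd] at h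
      refine h.deriv.trans ?_
      simp
    simp only [n0X, n0Y, n0Z, hpX, hpY] at e1 e2 ⊢
    rw [e1, e2, hsym]
    field_simp
    ring
  · rintro ⟨x, y⟩
    have e1 : pdY (n0Z μ f) x y
        = (Real.pi : ℂ) * Complex.I * (x : ℂ) / (μ : ℂ) * fderiv ℝ f (x, y) (0, 1) := by
      simp only [pdY, n0Z]
      exact ((aux_hY f hd x y).const_mul _).deriv
    simp only [n0X, e1, hpY]
    simp only [n0Z]
    ring
  · rintro ⟨x, y⟩
    have e1 : pdX (n0Z μ f) x y
        = (Real.pi : ℂ) * Complex.I / (μ : ℂ) * f (x, y)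
          + (Real.pi : ℂ) * Complex.I * (x : ℂ) / (μ : ℂ) * fderiv ℝ f (x, y) (1, 0) := by
      simp only [pdX, n0Z]
      have h := ((((hid x).const_mul ((Real.pi : ℂ) * Complex.I)).div_const (μ : ℂ)).mul
        (aux_hX f hd x y))
      refine h.deriv.trans ?_
      simp
    simp only [n0Y, e1, hpX]
    simp only [n0Z]
    ring

end
end

section
/- Curvature of the Z-perturbed connection (Theorem 'thm:min-but-nc'(a)): let α be a nonzero real number and define operators on module functions by B_X = ∇⁰_X, B_Y = ∇⁰_Y, and (B_Z f)(x,y) = (∇⁰_Z f)(x,y) − i·cos(απx/μ)·f(x,y). Then for every module function f and all (x,y): ((B_X B_Y − B_Y B_X − c·B_Z) f)(x,y) = c·i·cos(απx/μ)·f(x,y), ((B_X B_Z − B_Z B_X) f)(x,y) = 0, and ((B_Y B_Z − B_Z B_Y) f)(x,y) = (−πi/μ − i·(απ/μ)·sin(απx/μ))·f(x,y). In particular the curvature operator B_X B_Y − B_Y B_X − c·B_Z is nonzero (so Θ(X,Y) ≠ 0 and the curvature is not constant). -/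
noncomputable section

/-- The `Z`-perturbed operator `B_Z f = ∇⁰_Z f − i·cos(απx/μ)·f`. -/
def opBZ (μ α : ℝ) (f : ℝ × ℝ → ℂ) : ℝ × ℝ → ℂ := fun q =>
  n0Z μ f q - Complex.I * (Real.cos (α * Real.pi * q.1 / μ) : ℂ) * f q

theorem pdX_eq (f : ℝ × ℝ → ℂ) (hf : Differentiable ℝ f) (x y : ℝ) :
    HasDerivAt (fun t => f (t, y)) (fderiv ℝ f (x, y) (1, 0)) x := by
  have h1 : HasDerivAt (fun t : ℝ => (t, y)) ((1 : ℝ), (0 : ℝ)) x :=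
    (hasDerivAt_id x).prodMk (hasDerivAt_const x y)
  exact (hf (x, y)).hasFDerivAt.comp_hasDerivAt x h1

theorem pdY_eq (f : ℝ × ℝ → ℂ) (hf : Differentiable ℝ f) (x y : ℝ) :
    HasDerivAt (fun t => f (x, t)) (fderiv ℝ f (x, y) (0, 1)) y := by
  have h1 : HasDerivAt (fun t : ℝ => (x, t)) ((0 : ℝ), (1 : ℝ)) y :=
    (hasDerivAt_const y x).prodMk (hasDerivAt_id y)
  exact (hf (x, y)).hasFDerivAt.comp_hasDerivAt y h1

theorem mixed (f : ℝ × ℝ → ℂ) (hf : ContDiff ℝ (⊤ : ℕ∞) f) (x y : ℝ) :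
    ∃ m : ℂ, HasDerivAt (fun t => pdX f x t) m y ∧ HasDerivAt (fun t => pdY f t y) m x := by
  have hd : Differentiable ℝ f := hf.differentiable (by simp)
  have htwo : (2 : WithTop ℕ∞) ≤ ((⊤ : ℕ∞) : WithTop ℕ∞) :=
    WithTop.coe_le_coe.2 (le_top : (2 : ℕ∞) ≤ ⊤)
  have hd2 : Differentiable ℝ (fderiv ℝ f) :=
    ((hf.of_le htwo).fderiv_right (m := 1) (by norm_num)).differentiable (by simp)
  have hX : ∀ a b, pdX f a b = fderiv ℝ f (a, b) (1, 0) := fun a b => (pdX_eq f hd a b).deriv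
  have hY : ∀ a b, pdY f a b = fderiv ℝ f (a, b) (0, 1) := fun a b => (pdY_eq f hd a b).deriv
  have hs : IsSymmSndFDerivAt ℝ f (x, y) :=
    (hf.of_le htwo).contDiffAt.isSymmSndFDerivAt (by simp)
  refine ⟨fderiv ℝ (fderiv ℝ f) (x, y) (0, 1) (1, 0), ?_, ?_⟩
  · simp only [hX]
    have h1 : HasDerivAt (fun t : ℝ => (x, t)) ((0 : ℝ), (1 : ℝ)) y :=
      (hasDerivAt_const y x).prodMk (hasDerivAt_id y)
    have h2 := (hd2 (x, y)).hasFDerivAt.comp_hasDerivAt y h1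
    simpa using h2.clm_apply (hasDerivAt_const y ((1 : ℝ), (0 : ℝ)))
  · simp only [hY]
    rw [hs.eq]
    have h1 : HasDerivAt (fun t : ℝ => (t, y)) ((1 : ℝ), (0 : ℝ)) x :=
      (hasDerivAt_id x).prodMk (hasDerivAt_const x y)
    have h2 := (hd2 (x, y)).hasFDerivAt.comp_hasDerivAt x h1
    simpa using h2.clm_apply (hasDerivAt_const x ((0 : ℝ), (1 : ℝ)))

theorem hasX (f : ℝ × ℝ → ℂ) (hf : ContDiff ℝ (⊤ : ℕ∞) f) (x y : ℝ) :
    HasDerivAt (fun t => f (t, y)) (pdX f x y) x :=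
  (pdX_eq f (hf.differentiable (by simp)) x y).differentiableAt.hasDerivAt

theorem hasY (f : ℝ × ℝ → ℂ) (hf : ContDiff ℝ (⊤ : ℕ∞) f) (x y : ℝ) :
    HasDerivAt (fun t => f (x, t)) (pdY f x y) y :=
  (pdY_eq f (hf.differentiable (by simp)) x y).differentiableAt.hasDerivAt

theorem partOne (c : ℕ) (μ : ℝ) (hμ : μ ≠ 0) (α : ℝ) (f : ℝ × ℝ → ℂ)
    (hf : ContDiff ℝ (⊤ : ℕ∞) f) (q : ℝ × ℝ) :
    n0X c μ (n0Y f) q - n0Y (n0X c μ f) q - (c : ℂ) * opBZ μ α f q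
        = (c : ℂ) * Complex.I * (Real.cos (α * Real.pi * q.1 / μ) : ℂ) * f q := by
  obtain ⟨x, y⟩ := q
  obtain ⟨m, h1, h2⟩ := mixed f hf x y
  have hμ' : (μ : ℂ) ≠ 0 := by exact_mod_cast hμ
  have e1 : pdY (n0Y f) x y = -m := h1.neg.deriv
  have hx : HasDerivAt (fun t : ℝ => (t : ℂ)) 1 x := Complex.ofRealCLM.hasDerivAt
  have e2 : pdX (n0X c μ f) x y = _ :=
    (h2.neg.add (((hx.pow 2).const_mul
      ((Real.pi : ℂ) * (c : ℂ) * Complex.I / (2 * (μ : ℂ)))).mul (hasX f hf x y))).deriv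
  have e3 : n0X c μ (n0Y f) (x, y) = - pdY (n0Y f) x y +
    (Real.pi : ℂ) * (c : ℂ) * Complex.I / (2 * (μ : ℂ)) * (x : ℂ) ^ 2 * (-pdX f x y) := rfl
  have e4 : n0Y (n0X c μ f) (x, y) = - pdX (n0X c μ f) x y := rfl
  rw [e3, e4, e1, e2]
  simp only [opBZ, n0Z, Pi.pow_apply]
  field_simp
  push_cast
  ring

theorem partTwo (c : ℕ) (μ : ℝ) (α : ℝ) (f : ℝ × ℝ → ℂ)
    (hf : ContDiff ℝ (⊤ : ℕ∞) f) (q : ℝ × ℝ) :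
    n0X c μ (opBZ μ α f) q - opBZ μ α (n0X c μ f) q = 0 := by
  obtain ⟨x, y⟩ := q
  have h := hasY f hf x y
  have e1 : pdY (opBZ μ α f) x y = _ :=
    ((h.const_mul ((Real.pi : ℂ) * Complex.I * (x : ℂ) / (μ : ℂ))).sub
      (h.const_mul (Complex.I * (Real.cos (α * Real.pi * x / μ) : ℂ)))).deriv
  have e3 : n0X c μ (opBZ μ α f) (x, y) = - pdY (opBZ μ α f) x y +
    (Real.pi : ℂ) * (c : ℂ) * Complex.I / (2 * (μ : ℂ)) * (x : ℂ) ^ 2 * opBZ μ α f (x, y) := rfl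
  rw [e3, e1]
  simp only [opBZ, n0Z, n0X]
  ring

theorem partThree (μ : ℝ) (α : ℝ) (f : ℝ × ℝ → ℂ)
    (hf : ContDiff ℝ (⊤ : ℕ∞) f) (q : ℝ × ℝ) :
    n0Y (opBZ μ α f) q - opBZ μ α (n0Y f) q
        = (-((Real.pi : ℂ) * Complex.I / (μ : ℂ))
            - Complex.I * ((α * Real.pi / μ : ℝ) : ℂ)
              * (Real.sin (α * Real.pi * q.1 / μ) : ℂ)) * f q := by
  obtain ⟨x, y⟩ := q
  have h := hasX f hf x y
  have hx : HasDerivAt (fun t : ℝ => (t : ℂ)) 1 x := Complex.ofRealCLM.hasDerivAt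
  have hcos : HasDerivAt (fun t : ℝ => ((Real.cos (α * Real.pi * t / μ) : ℝ) : ℂ))
      ((-Real.sin (α * Real.pi * x / μ) * (α * Real.pi * 1 / μ) : ℝ) : ℂ) x :=
    ((((hasDerivAt_id x).const_mul (α * Real.pi)).div_const μ).cos).ofReal_comp
  have e1 : pdX (opBZ μ α f) x y = _ :=
    ((((hx.const_mul ((Real.pi : ℂ) * Complex.I)).div_const (μ : ℂ)).mul h).sub
      ((hcos.const_mul Complex.I).mul h)).deriv
  have e3 : n0Y (opBZ μ α f) (x, y) = - pdX (opBZ μ α f) x y := rfl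
  rw [e3, e1]
  simp only [opBZ, n0Z, n0Y]
  push_cast
  ring

/-- Theorem `thm:min-but-nc`(a): with `B_X = ∇⁰_X`, `B_Y = ∇⁰_Y`, and
`B_Z f = ∇⁰_Z f − i·cos(απx/μ)·f` for `α ≠ 0`, one has
`(B_XB_Y − B_YB_X − c·B_Z) f = c·i·cos(απx/μ)·f`, `(B_XB_Z − B_ZB_X) f = 0`, and
`(B_YB_Z − B_ZB_Y) f = (−πi/μ − i·(απ/μ)·sin(απx/μ))·f` for every module function `f`;
in particular the curvature operator `B_XB_Y − B_YB_X − c·B_Z` is nonzero. -/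
theorem statement10 (c : ℕ) (hc : 0 < c) (μ ν : ℝ) (hμ : μ ≠ 0) (α : ℝ) (hα : α ≠ 0) :
    (∀ f : ℝ × ℝ → ℂ, IsModuleFn f →
      (∀ q : ℝ × ℝ, n0X c μ (n0Y f) q - n0Y (n0X c μ f) q - (c : ℂ) * opBZ μ α f q
        = (c : ℂ) * Complex.I * (Real.cos (α * Real.pi * q.1 / μ) : ℂ) * f q) ∧
      (∀ q : ℝ × ℝ, n0X c μ (opBZ μ α f) q - opBZ μ α (n0X c μ f) q = 0) ∧
      (∀ q : ℝ × ℝ, n0Y (opBZ μ α f) q - opBZ μ α (n0Y f) q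
        = (-((Real.pi : ℂ) * Complex.I / (μ : ℂ))
            - Complex.I * ((α * Real.pi / μ : ℝ) : ℂ)
              * (Real.sin (α * Real.pi * q.1 / μ) : ℂ)) * f q)) ∧
    (∃ f : ℝ × ℝ → ℂ, IsModuleFn f ∧
      (fun q => n0X c μ (n0Y f) q - n0Y (n0X c μ f) q - (c : ℂ) * opBZ μ α f q)
        ≠ (0 : ℝ × ℝ → ℂ)) := by
  refine ⟨fun f hf => ⟨partOne c μ hμ α f hf.1, partTwo c μ α f hf.1, partThree μ α f hf.1⟩, ?_⟩
  let b : ContDiffBump (0 : ℝ) := ⟨1, 2, by norm_num, by norm_num⟩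
  have hb : ContDiff ℝ (⊤ : ℕ∞) (fun q : ℝ × ℝ => ((b q.1 : ℝ) : ℂ)) :=
    Complex.ofRealCLM.contDiff.comp (b.contDiff.comp contDiff_fst)
  refine ⟨fun q => ((b q.1 : ℝ) : ℂ), ⟨hb, fun _ _ => rfl, tsupport b, b.hasCompactSupport, ?_⟩, ?_⟩
  · intro x y hx
    simp [image_eq_zero_of_notMem_tsupport hx]
  · intro h
    have h0 := congrFun h (0, 0)
    have h0 := (partOne c μ hμ α _ hb (0, 0)).symm.trans h0
    have hb0 : b 0 = 1 := b.one_of_mem_closedBall (by simp [b])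
    simp [hb0] at h0
    omega

end
end
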